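/- arXiv:2102.01759 — 3 statements merged into one kernel-verified Lean document; each statement's English description precedes it below -/
import Mathlib

section
/- Let n be a positive natural number and let Y, K₁, K₂, Σ be n×n complex matrices such that K₁ and K₂ are unitary, Σ is a diagonal matrix whose diagonal entries are nonnegative real numbers, and Y = K₁ Σ K₂ᴴ (where ᴴ denotes conjugate transpose). Then the unitary matrix K₁K₂ᴴ minimizes the Frobenius distance to Y over all unitary matrices: for every n×n complex unitary matrix P, ‖K₁K₂ᴴ − Y‖_F ≤ ‖P − Y‖_F. -/
/-!
The Frobenius norm is invariant under multiplication by unitary matrices on either side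
(`frobNorm_unitary_mul_mul`), so with `Q = K₁ᴴ P K₂` the claim becomes `‖1 - S‖ ≤ ‖Q - S‖`
for `Q` unitary and `S = diag(r)` with `r ≥ 0`. For every unitary `W`,
`‖W - S‖² = n + ∑ rᵢ² - 2 ∑ rᵢ Re Wᵢᵢ` (`sum_norm_sq_unitary_sub_diagonal`). Since the entries of
a unitary matrix have modulus at most `1`, the last sum is largest at `W = 1`.
-/

open Matrix

/-- The Frobenius norm of a complex square matrix. -/
noncomputable def frobNorm {n : ℕ} (A : Matrix (Fin n) (Fin n) ℂ) : ℝ :=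
  Real.sqrt (∑ i, ∑ j, ‖A i j‖ ^ 2)

/-- The left-hand side is `frobNorm A ^ 2`; the trace on the right is in fact real. -/
lemma sum_norm_sq_eq_trace {n : ℕ} (A : Matrix (Fin n) (Fin n) ℂ) :
    ∑ i, ∑ j, ‖A i j‖ ^ 2 = (Aᴴ * A).trace.re := by
  rw [Finset.sum_comm]
  simp [Matrix.trace, Matrix.mul_apply, Complex.sq_norm, Complex.normSq_apply]

lemma frobNorm_unitary_mul_mul {n : ℕ} (U V A : Matrix (Fin n) (Fin n) ℂ)
    (hU : Uᴴ * U = 1) (hV : Vᴴ * V = 1) : frobNorm (U * A * Vᴴ) = frobNorm A := by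
  have h : (U * A * Vᴴ)ᴴ * (U * A * Vᴴ) = V * (Aᴴ * A * Vᴴ) := by
    calc (U * A * Vᴴ)ᴴ * (U * A * Vᴴ) = V * (Aᴴ * (Uᴴ * U) * A * Vᴴ) := by
          simp only [conjTranspose_mul, conjTranspose_conjTranspose, Matrix.mul_assoc]
      _ = V * (Aᴴ * A * Vᴴ) := by rw [hU, Matrix.mul_one]
  rw [frobNorm, frobNorm, sum_norm_sq_eq_trace, sum_norm_sq_eq_trace, h, Matrix.trace_mul_comm,
    Matrix.mul_assoc, hV, Matrix.mul_one]

lemma sum_norm_sq_unitary_sub_diagonal {n : ℕ} (W : Matrix (Fin n) (Fin n) ℂ) (r : Fin n → ℝ)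
    (hW : Wᴴ * W = 1) :
    ∑ i, ∑ j, ‖(W - diagonal fun k => (r k : ℂ)) i j‖ ^ 2
      = n + ∑ i, r i ^ 2 - 2 * ∑ i, r i * (W i i).re := by
  rw [sum_norm_sq_eq_trace, conjTranspose_sub, Matrix.sub_mul, Matrix.mul_sub, Matrix.mul_sub, hW,
    diagonal_conjTranspose, diagonal_mul_diagonal]
  simp [Matrix.trace, mul_comm, pow_two]
  ring

/-- Operator unitarization: given an SVD `Y = K₁ S K₂ᴴ` with `K₁, K₂` unitary and `S`
diagonal with nonnegative real diagonal entries, the unitary matrix `K₁K₂ᴴ` minimizes the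
Frobenius distance to `Y` over all unitary matrices. -/
theorem operator_unitarization (n : ℕ) (hn : 0 < n)
    (Y K₁ K₂ S : Matrix (Fin n) (Fin n) ℂ)
    (hK₁ : K₁ᴴ * K₁ = 1) (hK₂ : K₂ᴴ * K₂ = 1)
    (hSdiag : ∀ i j, i ≠ j → S i j = 0)
    (hSpos : ∀ i, ∃ r : ℝ, 0 ≤ r ∧ S i i = (r : ℂ))
    (hY : Y = K₁ * S * K₂ᴴ) :
    ∀ P : Matrix (Fin n) (Fin n) ℂ, Pᴴ * P = 1 →
      frobNorm (K₁ * K₂ᴴ - Y) ≤ frobNorm (P - Y) := by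
  intro P hP
  choose r hr hSr using hSpos
  have hS : S = diagonal fun k => (r k : ℂ) := by
    ext i j
    by_cases hij : i = j
    · subst hij
      simp [hSr]
    · simp [hij, hSdiag i j hij]
  have hK₁' : K₁ * K₁ᴴ = 1 := mul_eq_one_comm.mp hK₁
  have hK₂' : K₂ * K₂ᴴ = 1 := mul_eq_one_comm.mp hK₂
  set Q := K₁ᴴ * P * K₂ with hQdef
  have hPQ : P = K₁ * Q * K₂ᴴ := by
    calc P = (K₁ * K₁ᴴ) * P * (K₂ * K₂ᴴ) := by rw [hK₁', hK₂', Matrix.one_mul, Matrix.mul_one]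
      _ = K₁ * Q * K₂ᴴ := by simp only [hQdef, Matrix.mul_assoc]
  have hQ : Qᴴ * Q = 1 := by
    calc Qᴴ * Q = K₂ᴴ * (Pᴴ * (K₁ * K₁ᴴ) * P) * K₂ := by
          simp only [hQdef, conjTranspose_mul, conjTranspose_conjTranspose, Matrix.mul_assoc]
      _ = 1 := by rw [hK₁', Matrix.mul_one, hP, Matrix.mul_one, hK₂]
  have hPY : P - Y = K₁ * (Q - S) * K₂ᴴ := by
    rw [Matrix.mul_sub, Matrix.sub_mul, ← hPQ, ← hY]
  have hKY : K₁ * K₂ᴴ - Y = K₁ * (1 - S) * K₂ᴴ := by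
    rw [Matrix.mul_sub, Matrix.sub_mul, Matrix.mul_one, ← hY]
  rw [hPY, hKY, frobNorm_unitary_mul_mul _ _ _ hK₁ hK₂, frobNorm_unitary_mul_mul _ _ _ hK₁ hK₂]
  apply Real.sqrt_le_sqrt
  rw [hS, sum_norm_sq_unitary_sub_diagonal Q r hQ,
    sum_norm_sq_unitary_sub_diagonal 1 r (by simp)]
  have hle : ∑ i, r i * (Q i i).re ≤ ∑ i, r i * ((1 : Matrix (Fin n) (Fin n) ℂ) i i).re := by
    refine Finset.sum_le_sum fun i _ => mul_le_mul_of_nonneg_left ?_ (hr i)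
    rw [Matrix.one_apply_eq, Complex.one_re]
    exact (Complex.re_le_norm _).trans
      (entry_norm_bound_of_unitary (mem_unitaryGroup_iff'.mpr hQ) i i)
  linarith
end

section
/- Let n be a positive natural number, let D be an n×n complex diagonal matrix whose diagonal entries are nonnegative real numbers, and let P be any n×n complex unitary matrix. Then ‖1 − D‖_F ≤ ‖P − D‖_F, where 1 denotes the n×n identity matrix; i.e., the identity matrix minimizes the Frobenius distance to D over all unitary matrices. -/
open Matrix

/-!
The distance is compared column by column. Column `j` of `D` is `r • e_j` with `r ≥ 0`, and column
`j` of a unitary `Q` is a unit vector, so their squared distance is `1 - 2 * r * re (Q j j) + r ^ 2`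
(`sum_norm_sub_sq_col`). Since `re (Q j j) ≤ 1`, with equality for `Q = 1`, the identity minimizes
every column's contribution simultaneously.
-/

theorem sum_norm_sq_col {n : ℕ} {Q : Matrix (Fin n) (Fin n) ℂ} (hQ : Qᴴ * Q = 1) (j : Fin n) :
    ∑ i, ‖Q i j‖ ^ 2 = 1 := by
  have h := congrFun (congrFun hQ j) j
  simp only [mul_apply, conjTranspose_apply, one_apply_eq, RCLike.star_def,
    Complex.conj_mul'] at h
  exact_mod_cast h

theorem sum_norm_sub_sq_col {n : ℕ} {Q D : Matrix (Fin n) (Fin n) ℂ} (hQ : Qᴴ * Q = 1)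
    (hD : ∀ i j, i ≠ j → D i j = 0) {j : Fin n} {r : ℝ} (hr : D j j = (r : ℂ)) :
    ∑ i, ‖(Q - D) i j‖ ^ 2 = 1 - 2 * r * (Q j j).re + r ^ 2 := by
  have h : ∀ i, ‖(Q - D) i j‖ ^ 2
      = ‖Q i j‖ ^ 2 + if i = j then r ^ 2 - 2 * r * (Q j j).re else 0 := by
    intro i
    split_ifs with hij
    · subst hij
      simp only [Matrix.sub_apply, hr, Complex.sq_norm, Complex.normSq_apply, Complex.sub_re,
        Complex.sub_im, Complex.ofReal_re, Complex.ofReal_im]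
      ring
    · simp [hD i j hij]
  simp only [h, Finset.sum_add_distrib, sum_norm_sq_col hQ, Finset.sum_ite_eq',
    Finset.mem_univ, if_true]
  ring

/-- The unitary diagonal case of operator unitarization: for a diagonal matrix `D` with
nonnegative real diagonal entries, the identity matrix minimizes the Frobenius distance to
`D` over all unitary matrices. -/
theorem identity_closest_unitary_to_diagonal (n : ℕ) (hn : 0 < n)
    (D : Matrix (Fin n) (Fin n) ℂ)
    (hDdiag : ∀ i j, i ≠ j → D i j = 0)
    (hDpos : ∀ i, ∃ r : ℝ, 0 ≤ r ∧ D i i = (r : ℂ))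
    (P : Matrix (Fin n) (Fin n) ℂ) (hP : Pᴴ * P = 1) :
    frobNorm (1 - D) ≤ frobNorm (P - D) := by
  unfold frobNorm
  apply Real.sqrt_le_sqrt
  rw [Finset.sum_comm, Finset.sum_comm (f := fun i j => ‖(P - D) i j‖ ^ 2)]
  refine Finset.sum_le_sum fun j _ => ?_
  obtain ⟨r, hr0, hr⟩ := hDpos j
  rw [sum_norm_sub_sq_col (by simp) hDdiag hr, sum_norm_sub_sq_col hP hDdiag hr]
  have hre : (P j j).re ≤ 1 :=
    (Complex.re_le_norm _).trans
      (entry_norm_bound_of_unitary (mem_unitaryGroup_iff'.mpr hP) j j)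
  simp only [one_apply_eq, Complex.one_re]
  nlinarith [mul_le_mul_of_nonneg_left hre hr0]
end

section
/- Let m, n be positive natural numbers, let f : ℝⁿ → ℝ be any function, let A be an m×n real matrix, let g, h ∈ ℝᵐ, let x₀ ∈ ℝⁿ, and set p = Aᵀ·(h − A·x₀). Then for all x ∈ ℝⁿ, [f(x) − f(x₀) − pᵀ·(x − x₀)] + (1/2)·‖A·x − g‖² = f(x) + (1/2)·‖A·x − (g + h − A·x₀)‖² + C, where C = −f(x₀) + pᵀ·x₀ − gᵀ·(h − A·x₀) − (1/2)·‖h − A·x₀‖² is independent of x, and ‖·‖ is the Euclidean norm on ℝᵐ. -/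
/-!
With `d = h - A x₀`, adjointness gives `p ⬝ᵥ x = d ⬝ᵥ A x`. Expanding the shifted square
`½‖(A x - g) - d‖²` gives `½‖A x - g‖²`, the cross term `-d ⬝ᵥ A x`, and terms
independent of `x`.
-/

open Matrix

/-- Equivalence of the two formulations of Bregman iterative regularization (`r = 1`):
with `p = Aᵀ·(h − A·x₀)`, for all `x`,
`[f(x) − f(x₀) − pᵀ(x − x₀)] + ½‖Ax − g‖² = f(x) + ½‖Ax − (g + h − Ax₀)‖² + C`
where `C = −f(x₀) + pᵀ·x₀ − gᵀ(h − Ax₀) − ½‖h − Ax₀‖²` (squared Euclidean norms written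
as dot products). -/
theorem bregman_shifted_least_squares_eq (m n : ℕ) (hm : 0 < m) (hn : 0 < n)
    (f : (Fin n → ℝ) → ℝ) (A : Matrix (Fin m) (Fin n) ℝ)
    (g h : Fin m → ℝ) (x₀ : Fin n → ℝ) :
    let p : Fin n → ℝ := Aᵀ *ᵥ (h - A *ᵥ x₀)
    ∀ x : Fin n → ℝ,
      (f x - f x₀ - p ⬝ᵥ (x - x₀)) + (1 / 2) * ((A *ᵥ x - g) ⬝ᵥ (A *ᵥ x - g))
        = f x + (1 / 2) * ((A *ᵥ x - (g + h - A *ᵥ x₀)) ⬝ᵥ (A *ᵥ x - (g + h - A *ᵥ x₀)))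
            + (-f x₀ + p ⬝ᵥ x₀ - g ⬝ᵥ (h - A *ᵥ x₀)
                - (1 / 2) * ((h - A *ᵥ x₀) ⬝ᵥ (h - A *ᵥ x₀))) := by
  intro p x
  -- The residual `d = h - A x₀` turns the shifted right-hand side into `g + d`.
  obtain ⟨d, hd⟩ : ∃ d, d = h - A *ᵥ x₀ := ⟨_, rfl⟩
  have hshift : A *ᵥ x - (g + h - A *ᵥ x₀) = A *ᵥ x - g - d := by
    rw [hd]; abel
  -- Adjointness: the linear Bregman term depends on `x` only through `A x`.
  have hadj : p ⬝ᵥ x = d ⬝ᵥ (A *ᵥ x) := by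
    simp only [p, ← hd]
    rw [mulVec_transpose, dotProduct_mulVec]
  rw [hshift, ← hd, dotProduct_sub p, hadj]
  simp only [sub_dotProduct, dotProduct_sub]
  rw [dotProduct_comm (A *ᵥ x) d, dotProduct_comm g d]
  ring
end
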